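/- Let I ⊆ ℝ be an interval, let f : I → ℝ be a strictly convex continuous function, let 𝓗 be a complex Hilbert space, and let (Hᵢ)_{i∈ι} be a net of self-adjoint bounded operators on 𝓗 with σ(Hᵢ) ⊆ I for all i, such that (Hᵢ) converges in the weak operator topology to a self-adjoint bounded operator H with σ(H) ⊆ I and (f(Hᵢ)) converges in the weak operator topology to f(H). If φ : I → ℝ is a continuous function such that x ↦ φ(x)/max(1, |x|, f(x)) is bounded on I, then (φ(Hᵢ)) converges in the weak operator topology to φ(H). -/

import Mathlib

set_option synthInstance.maxHeartbeats 400000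
set_option maxHeartbeats 800000

open scoped InnerProductSpace
open Filter Topology

/-!
The Bregman divergence `D_c x = f x - f c - f' c * (x - c)` differs from `f` by an affine function,
so `⟪D_c(H i) u, u⟫` converges to `⟪D_c(T) u, u⟫`. Cut `v` into pieces `u_k`, spectrally localised
for `T` near the points `c_k` of a mesh. Then `⟪D_{c_k}(T) u_k, u_k⟫` is at most `‖u_k‖ ^ 2` times a
second difference of `f`, and the sum of these second differences telescopes to `0` as the mesh is
refined. Strict convexity makes `D_c` dominate `max (1, |x|, f x)` away from `c`, so in the limit
`H i` puts no spectral mass of `u_k`, even weighted by this maximum, away from the cell of `c_k`.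
Hence `φ(H i) u_k` is `φ(c_k) u_k` up to the oscillation of `φ` near `c_k`, and as the cells have
bounded overlap, these errors can be summed in the `ℓ²` sense.
-/

section Scalar

open Set Asymptotics

variable {I : Set ℝ} {f w φ : ℝ → ℝ} {b c d x y α β ρ ε : ℝ}

lemma mem_interior_of_lt_of_lt (hI : I.OrdConnected) (hα : α ∈ I) (hβ : β ∈ I)
    (hαc : α < c) (hcβ : c < β) : c ∈ interior I :=
  mem_interior.2 ⟨Ioo α β, Ioo_subset_Icc_self.trans (hI.out hα hβ), isOpen_Ioo, hαc, hcβ⟩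

/-- The Bregman divergence of `f` between `x` and the base point `c`: the height of the graph of
`f` over its supporting line at `c`, whose slope is taken to be the right derivative. -/
noncomputable def bregman (f : ℝ → ℝ) (c x : ℝ) : ℝ :=
  f x - f c - derivWithin f (Ioi c) c * (x - c)

/-- The weight `max (1, |x|, f x)` bounding the admissible growth of `φ`. -/
def growthWeight (f : ℝ → ℝ) (x : ℝ) : ℝ := max 1 (max |x| (f x))

lemma growthWeight_pos (f : ℝ → ℝ) (x : ℝ) : 0 < growthWeight f x :=
  zero_lt_one.trans_le (le_max_left _ _)

lemma isBigO_growthWeight_of_abs_div_le {C : ℝ} (hC : ∀ x ∈ I, |φ x / growthWeight f x| ≤ C) :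
    φ =O[𝓟 I] growthWeight f := by
  refine isBigO_principal.2 ⟨C, fun x hx => ?_⟩
  have hle := hC x hx
  rwa [abs_div, div_le_iff₀ (abs_pos.2 (growthWeight_pos f x).ne')] at hle

lemma continuousOn_bregman (hf : ContinuousOn f I) (c : ℝ) : ContinuousOn (bregman f c) I := by
  unfold bregman
  fun_prop

lemma bregman_self (f : ℝ → ℝ) (c : ℝ) : bregman f c c = 0 := by simp [bregman]

lemma bregman_nonneg (hf : ConvexOn ℝ I f) (hc : c ∈ interior I) (hx : x ∈ I) :
    0 ≤ bregman f c x := by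
  rw [bregman]
  rcases lt_trichotomy x c with hlt | rfl | hgt
  · have hslope := (hf.slope_le_leftDeriv_of_mem_interior hx hc hlt).trans
      (hf.leftDeriv_le_rightDeriv_of_mem_interior hc)
    rw [slope_def_field, div_le_iff₀ (sub_pos.2 hlt)] at hslope
    linarith
  · simp
  · have hslope := hf.rightDeriv_le_slope_of_mem_interior hc hx hgt
    rw [slope_def_field, le_div_iff₀ (sub_pos.2 hgt)] at hslope
    linarith

lemma bregman_pos (hf : StrictConvexOn ℝ I f) (hc : c ∈ interior I) (hx : x ∈ I) (hxc : x ≠ c) :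
    0 < bregman f c x := by
  have hcI : c ∈ I := interior_subset hc
  have hmid : (2⁻¹ : ℝ) • c + (2⁻¹ : ℝ) • x ∈ I :=
    hf.1 hcI hx (by norm_num) (by norm_num) (by norm_num)
  have hnonneg := bregman_nonneg hf.convexOn hc hmid
  have hstrict := hf.2 hcI hx hxc.symm (show (0 : ℝ) < 2⁻¹ by norm_num)
    (show (0 : ℝ) < 2⁻¹ by norm_num) (by norm_num)
  simp only [bregman, smul_eq_mul] at hnonneg hstrict ⊢
  linarith

lemma convexOn_bregman (hf : ConvexOn ℝ I f) (c : ℝ) : ConvexOn ℝ I (bregman f c) := by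
  have haffine : ConvexOn ℝ I fun x => -f c - derivWithin f (Ioi c) c * (x - c) := by
    refine ⟨hf.1, fun x _ y _ a b _ _ hab => le_of_eq ?_⟩
    simp only [smul_eq_mul]
    linear_combination (-f c + derivWithin f (Ioi c) c * c) * hab.symm
  refine (hf.add haffine).congr fun x _ => ?_
  simp only [Pi.add_apply, bregman]
  ring

lemma bregman_eq_add (f : ℝ → ℝ) (b c x : ℝ) :
    bregman f c x = bregman f c b + bregman f b x +
      (derivWithin f (Ioi b) b - derivWithin f (Ioi c) c) * (x - b) := by
  simp only [bregman]
  ring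

lemma bregman_le_bregman_of_mem_uIcc (hf : ConvexOn ℝ I f) (hc : c ∈ interior I)
    (hb : b ∈ interior I) (hbcx : b ∈ uIcc c x) : bregman f b x ≤ bregman f c x := by
  have hnonneg := bregman_nonneg hf hc (interior_subset hb)
  have hmono : 0 ≤ (derivWithin f (Ioi b) b - derivWithin f (Ioi c) c) * (x - b) := by
    rcases mem_uIcc.1 hbcx with ⟨hcb, hbx⟩ | ⟨hxb, hbc⟩
    · exact mul_nonneg (sub_nonneg.2 (hf.monotoneOn_rightDeriv hc hb hcb)) (sub_nonneg.2 hbx)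
    · exact mul_nonneg_of_nonpos_of_nonpos
        (sub_nonpos.2 (hf.monotoneOn_rightDeriv hb hc hbc)) (sub_nonpos.2 hxb)
  linarith [bregman_eq_add f b c x]

lemma abs_sub_mul_bregman_le (hf : ConvexOn ℝ I f) (hc : c ∈ I) (hx : x ∈ I)
    (hy : y ∈ uIcc c x) : |x - c| * bregman f c y ≤ |y - c| * bregman f c x := by
  rw [← segment_eq_uIcc] at hy
  obtain ⟨s, t, hs, ht, hst, rfl⟩ := hy
  have hconvex := (convexOn_bregman hf c).2 hc hx hs ht hst
  simp only [smul_eq_mul, bregman_self, mul_zero, zero_add] at hconvex ⊢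
  have hy : s * c + t * x - c = t * (x - c) := by linear_combination c * hst
  rw [hy, abs_mul, abs_of_nonneg ht]
  linarith [mul_le_mul_of_nonneg_left hconvex (abs_nonneg (x - c))]

lemma growthWeight_le_add_mul (hf : ConvexOn ℝ I f) (hc : c ∈ interior I) (hx : x ∈ I)
    (hyc : y ≠ c) (hy : y ∈ uIcc c x) :
    growthWeight f x ≤ bregman f c x +
      ((1 + |c| + |f c|) / |y - c| + 1 + |derivWithin f (Ioi c) c|) * |x - c| := by
  have hyx : 1 ≤ |x - c| / |y - c| :=
    (one_le_div (abs_pos.2 (sub_ne_zero.2 hyc))).2 (abs_sub_left_of_mem_uIcc hy)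
  have hone : 1 + |c| + |f c| ≤ (1 + |c| + |f c|) / |y - c| * |x - c| := by
    rw [div_mul_eq_mul_div, mul_div_assoc]
    exact le_mul_of_one_le_right (by positivity) hyx
  have hslope := (le_abs_self _).trans_eq (abs_mul (derivWithin f (Ioi c) c) (x - c))
  have hslope_nonneg : 0 ≤ |derivWithin f (Ioi c) c| * |x - c| := by positivity
  have hnonneg := bregman_nonneg hf hc hx
  have hfx : f x = bregman f c x + f c + derivWithin f (Ioi c) c * (x - c) := by
    rw [bregman]; ring
  have habs : |x| ≤ |c| + |x - c| := by simpa using abs_add_le c (x - c)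
  refine max_le ?_ (max_le ?_ ?_) <;>
    linarith [abs_nonneg c, abs_nonneg (f c), le_abs_self (f c), abs_nonneg (x - c)]

lemma exists_growthWeight_le_mul_bregman (hf : StrictConvexOn ℝ I f) (hyc : y ≠ c) :
    ∃ K, 0 ≤ K ∧ ∀ x ∈ I, c ∈ interior I → y ∈ uIcc c x →
      growthWeight f x ≤ K * bregman f c x := by
  set M := (1 + |c| + |f c|) / |y - c| + 1 + |derivWithin f (Ioi c) c|
  by_cases hcy : c ∈ interior I ∧ y ∈ I
  · obtain ⟨hc, hy⟩ := hcy
    have hpos := bregman_pos hf hc hy hyc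
    refine ⟨1 + M * (|y - c| / bregman f c y), by positivity, fun x hx _ hyx => ?_⟩
    have hdist : |x - c| ≤ |y - c| / bregman f c y * bregman f c x := by
      rw [div_mul_eq_mul_div, le_div_iff₀ hpos]
      exact abs_sub_mul_bregman_le hf.convexOn (interior_subset hc) hx hyx
    calc growthWeight f x ≤ bregman f c x + M * |x - c| :=
          growthWeight_le_add_mul hf.convexOn hc hx hyc hyx
      _ ≤ bregman f c x + M * (|y - c| / bregman f c y * bregman f c x) := by gcongr
      _ = _ := by ring
  · refine ⟨0, le_rfl, fun x hx hc hyx => (hcy ⟨hc, ?_⟩).elim⟩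
    exact hf.1.ordConnected.uIcc_subset (interior_subset hc) hx hyx

lemma exists_abs_le_mul_bregman (hf : StrictConvexOn ℝ I f) (hα : α ∈ I) (hβ : β ∈ I)
    (hαβ : α < β) (hρ : 0 < ρ) (hw : w =O[𝓟 I] growthWeight f)
    (hw_zero : ∀ x ∈ I, x ∈ Icc (α - ρ) (β + ρ) → w x = 0) :
    ∃ K, 0 ≤ K ∧ ∀ c ∈ Ioo α β, ∀ x ∈ I, |w x| ≤ K * bregman f c x := by
  have hI := hf.1.ordConnected
  obtain ⟨C, hC, hwC⟩ := hw.exists_nonneg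
  obtain ⟨Kα, hKα, hleft⟩ := exists_growthWeight_le_mul_bregman hf (c := α) (y := α - ρ)
    (by linarith)
  obtain ⟨Kβ, hKβ, hright⟩ := exists_growthWeight_le_mul_bregman hf (c := β) (y := β + ρ)
    (by linarith)
  refine ⟨C * (Kα + Kβ), by positivity, fun c hc x hx => ?_⟩
  have hcI := mem_interior_of_lt_of_lt hI hα hβ hc.1 hc.2
  have hwx : |w x| ≤ C * growthWeight f x := by
    simpa [abs_of_pos (growthWeight_pos f x)] using (isBigOWith_principal.1 hwC) x hx
  have hbase : ∀ {b K}, K ≤ Kα + Kβ → b ∈ interior I → b ∈ uIcc c x →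
      growthWeight f x ≤ K * bregman f b x → |w x| ≤ C * (Kα + Kβ) * bregman f c x := by
    intro b K hKle hb hbcx hweight
    have hnonneg := bregman_nonneg hf.convexOn hb hx
    calc |w x| ≤ C * (K * bregman f b x) := hwx.trans (by gcongr)
      _ ≤ C * ((Kα + Kβ) * bregman f c x) := by
        gcongr
        exact bregman_le_bregman_of_mem_uIcc hf.convexOn hcI hb hbcx
      _ = _ := by ring
  rcases lt_or_ge x (α - ρ) with hxα | hxα
  · have hαI := mem_interior_of_lt_of_lt hI hx hβ (hxα.trans (by linarith)) hαβ
    exact hbase (by linarith) hαI (mem_uIcc.2 (.inr ⟨by linarith, hc.1.le⟩))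
      (hleft x hx hαI (mem_uIcc.2 (.inr ⟨hxα.le, by linarith⟩)))
  rcases lt_or_ge (β + ρ) x with hxβ | hxβ
  · have hβI := mem_interior_of_lt_of_lt hI hα hx hαβ (lt_trans (by linarith) hxβ)
    exact hbase (by linarith) hβI (mem_uIcc.2 (.inl ⟨hc.2.le, by linarith⟩))
      (hright x hx hβI (mem_uIcc.2 (.inl ⟨by linarith, hxβ.le⟩)))
  · rw [hw_zero x hx ⟨hxα, hxβ⟩, abs_zero]
    exact mul_nonneg (by positivity) (bregman_nonneg hf.convexOn hcI hx)

lemma bregman_le_second_difference (hf : ConvexOn ℝ I f) (hc : c ∈ interior I)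
    (hleft : c - d ∈ I) (hright : c + d ∈ I) (hx : x ∈ Icc (c - d) (c + d)) :
    bregman f c x ≤ f (c - d) + f (c + d) - 2 * f c := by
  have hsum : bregman f c (c - d) + bregman f c (c + d) = f (c - d) + f (c + d) - 2 * f c := by
    simp only [bregman]; ring
  have hmax := (convexOn_bregman hf c).le_max_of_mem_Icc hleft hright hx
  have hnonneg_left := bregman_nonneg hf hc hleft
  have hnonneg_right := bregman_nonneg hf hc hright
  rw [← hsum]
  exact hmax.trans (max_le (by linarith) (by linarith))

lemma exists_forall_abs_sub_le (hφ : ContinuousOn φ I) (hαβ : Icc α β ⊆ I) (hε : 0 < ε) :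
    ∃ r > 0, ∀ x ∈ Icc α β, ∀ y ∈ I, |x - y| < r → |φ y - φ x| ≤ ε := by
  have hcompact : IsCompact ((↑) ⁻¹' Icc α β : Set I) :=
    Topology.IsInducing.subtypeVal.isCompact_preimage_iff (by simpa using hαβ) |>.2 isCompact_Icc
  have hunif := hcompact.uniformContinuousAt_of_continuousAt (I.domRestrict φ)
    (fun x _ => hφ.domRestrict.continuousAt) (Metric.dist_mem_uniformity hε)
  obtain ⟨r, hr, hr_sub⟩ := Metric.mem_uniformity_dist.1 hunif
  refine ⟨r, hr, fun x hx y hy hxy => ?_⟩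
  have hdist := hr_sub (a := ⟨x, hαβ hx⟩) (b := ⟨y, hy⟩) hxy hx
  exact (abs_sub_comm _ _).trans_le hdist.le

lemma exists_subset_Icc_of_isCompact {K : Set ℝ} (hK : IsCompact K) (hKI : K ⊆ I)
    (hI : I.Nontrivial) : ∃ α ∈ I, ∃ β ∈ I, α < β ∧ K ⊆ Icc α β := by
  obtain ⟨a, ha, b, hb, hab⟩ := hI.exists_lt
  have hsub : insert a (insert b K) ⊆ I := insert_subset ha (insert_subset hb hKI)
  have hcompact : IsCompact (insert a (insert b K)) := (hK.insert b).insert a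
  obtain ⟨α, hα, hα_le⟩ := hcompact.exists_isLeast (insert_nonempty _ _)
  obtain ⟨β, hβ, hβ_ge⟩ := hcompact.exists_isGreatest (insert_nonempty _ _)
  exact ⟨α, hsub hα, β, hsub hβ,
    ((hα_le (by simp)).trans_lt hab).trans_le (hβ_ge (by simp)),
    fun x hx => ⟨hα_le (by simp [hx]), hβ_ge (by simp [hx])⟩⟩

end Scalar

section Mesh

open Set Asymptotics

variable {a b z α β δ ε x : ℝ} {k n : ℕ} {I : Set ℝ} {f φ : ℝ → ℝ}

/-- The piecewise linear ramp that is `0` on `(-∞, 0]`, the identity on `[0, 1]` and `1` on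
`[1, ∞)`. -/
def ramp (z : ℝ) : ℝ := max 0 (min z 1)

/-- For `a ≤ b`, the trapezoidal bump that is `1` on `[a + 1, b]` and vanishes outside
`(a, b + 1)`. -/
def plateau (a b z : ℝ) : ℝ := ramp (z - a) - ramp (z - b)

lemma continuous_ramp : Continuous ramp := by
  unfold ramp
  fun_prop

lemma monotone_ramp : Monotone ramp := fun _ _ h => max_le_max_left _ (min_le_min_right _ h)

lemma ramp_nonneg (z : ℝ) : 0 ≤ ramp z := le_max_left _ _

lemma ramp_le_one (z : ℝ) : ramp z ≤ 1 := max_le zero_le_one (min_le_right _ _)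

lemma ramp_of_nonpos (hz : z ≤ 0) : ramp z = 0 := max_eq_left ((min_le_left _ _).trans hz)

lemma ramp_of_one_le (hz : 1 ≤ z) : ramp z = 1 := by simp [ramp, hz]

lemma continuous_plateau (a b : ℝ) : Continuous (plateau a b) :=
  (continuous_ramp.comp (continuous_sub_right a)).sub
    (continuous_ramp.comp (continuous_sub_right b))

lemma plateau_nonneg (hab : a ≤ b) (z : ℝ) : 0 ≤ plateau a b z :=
  sub_nonneg.2 (monotone_ramp (by linarith))

lemma plateau_le_one (a b z : ℝ) : plateau a b z ≤ 1 := by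
  linarith [ramp_le_one (z - a), ramp_nonneg (z - b), plateau.eq_1 a b z]

lemma plateau_eq_one (hz : z ∈ Icc (a + 1) b) : plateau a b z = 1 := by
  rw [plateau, ramp_of_one_le (by linarith [hz.1]), ramp_of_nonpos (by linarith [hz.2]), sub_zero]

lemma mem_Ioo_of_plateau_ne_zero (hab : a ≤ b) (hz : plateau a b z ≠ 0) :
    z ∈ Ioo a (b + 1) := by
  contrapose! hz
  rw [plateau]
  by_cases hza : z ≤ a
  · rw [ramp_of_nonpos (by linarith), ramp_of_nonpos (by linarith), sub_zero]
  · have hzb : b + 1 ≤ z := not_lt.1 fun h => hz ⟨not_le.1 hza, h⟩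
    rw [ramp_of_one_le (by linarith), ramp_of_one_le (by linarith), sub_self]

lemma sum_plateau_eq_one (hz : z ∈ Icc (1 : ℝ) n) :
    ∑ k ∈ Finset.range n, plateau k (k + 1) z = 1 := by
  have htelescope := Finset.sum_range_sub' (fun k : ℕ => ramp (z - k)) n
  push_cast at htelescope
  simp only [plateau]
  rw [htelescope, sub_zero, ramp_of_one_le hz.1, ramp_of_nonpos (by linarith [hz.2]), sub_zero]

lemma sum_plateau_le_five (n : ℕ) (z : ℝ) :
    ∑ k ∈ Finset.range n, plateau (k - 2) (k + 3) z ≤ 5 := by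
  let r : ℕ → ℝ := fun k => ramp (z - (k - 2))
  have htelescope : ∑ k ∈ Finset.range n, plateau (k - 2) (k + 3) z =
      ∑ j ∈ Finset.range 5, r j - ∑ j ∈ Finset.range 5, r (n + j) := by
    induction n with
    | zero => simp
    | succ n ih =>
      have hlast : plateau (n - 2) (n + 3) z = r n - r (n + 5) := by
        simp only [plateau, r]; push_cast; ring_nf
      rw [Finset.sum_range_succ, ih, hlast]
      simp only [Finset.sum_range_succ, Finset.sum_range_zero]
      ring_nf
  have hfirst : ∑ j ∈ Finset.range 5, r j ≤ 5 := by
    simpa using Finset.sum_le_card_nsmul (Finset.range 5) r 1 fun j _ => ramp_le_one _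
  have hlast : 0 ≤ ∑ j ∈ Finset.range 5, r (n + j) := Finset.sum_nonneg fun j _ => ramp_nonneg _
  linarith

/-- The `k`-th point of the mesh with step `δ` starting at `α`. -/
def meshPoint (α δ : ℝ) (k : ℕ) : ℝ := α + k * δ

/-- The hat functions `k = 0, …, n` of a partition of unity subordinate to the mesh on
`[α, α + (n + 2) * δ]`: on that interval the `k`-th one is supported in
`[meshPoint α δ k, meshPoint α δ (k + 2)]`. Clamping makes the first and the last one equal to `1`
near the endpoints. -/
noncomputable def meshHat (α δ : ℝ) (n k : ℕ) (x : ℝ) : ℝ :=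
  plateau k (k + 1) (max 1 (min ((x - α) / δ) (n + 1)))

/-- A cutoff that is `1` within `2 * δ` of `meshPoint α δ (k + 1)`, the centre of the `k`-th hat,
and vanishes beyond distance `3 * δ`. -/
noncomputable def meshCutoff (α δ : ℝ) (k : ℕ) (x : ℝ) : ℝ :=
  plateau (k - 2) (k + 3) ((x - α) / δ)

lemma meshPoint_succ (α δ : ℝ) (k : ℕ) : meshPoint α δ (k + 1) = meshPoint α δ k + δ := by
  simp only [meshPoint]; push_cast; ring

lemma meshPoint_zero (α δ : ℝ) : meshPoint α δ 0 = α := by simp [meshPoint]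

lemma meshPoint_last (α β : ℝ) (n : ℕ) :
    meshPoint α ((β - α) / (n + 2)) (n + 2) = β := by
  simp only [meshPoint]
  push_cast
  field_simp
  ring

lemma tendsto_meshStep (α β : ℝ) :
    Tendsto (fun n : ℕ => (β - α) / ((n : ℝ) + 2)) atTop (𝓝 0) :=
  tendsto_const_nhds.div_atTop
    (tendsto_atTop_add_const_right _ _ tendsto_natCast_atTop_atTop)

lemma strictMono_meshPoint (hδ : 0 < δ) : StrictMono (meshPoint α δ) :=
  strictMono_nat_of_lt_succ fun k => by simpa [meshPoint_succ] using hδ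

lemma meshPoint_mem_Icc (hδ : 0 < δ) (hk : k ≤ n) :
    meshPoint α δ k ∈ Icc α (meshPoint α δ n) :=
  ⟨(meshPoint_zero α δ).symm.trans_le ((strictMono_meshPoint hδ).monotone k.zero_le),
    (strictMono_meshPoint hδ).monotone hk⟩

lemma continuous_meshHat (α δ : ℝ) (n k : ℕ) : Continuous (meshHat α δ n k) :=
  (continuous_plateau _ _).comp (by fun_prop)

lemma meshHat_nonneg (α δ : ℝ) (n k : ℕ) (x : ℝ) : 0 ≤ meshHat α δ n k x :=
  plateau_nonneg (by linarith) _

lemma sum_meshHat (α δ : ℝ) (n : ℕ) (x : ℝ) :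
    ∑ k ∈ Finset.range (n + 1), meshHat α δ n k x = 1 :=
  sum_plateau_eq_one ⟨le_max_left _ _, by simp⟩

lemma sum_sq_meshHat_le_one (α δ : ℝ) (n : ℕ) (x : ℝ) :
    ∑ k ∈ Finset.range (n + 1), meshHat α δ n k x ^ 2 ≤ 1 := by
  refine (Finset.sum_le_sum fun k _ => ?_).trans_eq (sum_meshHat α δ n x)
  exact pow_le_of_le_one (meshHat_nonneg α δ n k x) (plateau_le_one _ _ _) two_ne_zero

lemma mem_Icc_of_meshHat_ne_zero (hδ : 0 < δ) (hk : k ∈ Finset.range (n + 1))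
    (hx : x ∈ Icc α (meshPoint α δ (n + 2))) (hne : meshHat α δ n k x ≠ 0) :
    x ∈ Icc (meshPoint α δ k) (meshPoint α δ (k + 2)) := by
  have hkn : (k : ℝ) ≤ n := by exact_mod_cast Finset.mem_range_succ_iff.1 hk
  obtain ⟨hz, hzn⟩ : 0 ≤ (x - α) / δ ∧ (x - α) / δ ≤ n + 2 := by
    rw [le_div_iff₀ hδ, div_le_iff₀ hδ]
    simp only [meshPoint] at hx
    push_cast at hx
    exact ⟨by linarith [hx.1], by linarith [hx.2]⟩
  obtain ⟨hlo, hhi⟩ := mem_Ioo_of_plateau_ne_zero (by linarith) hne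
  have hbounds : k ≤ (x - α) / δ ∧ (x - α) / δ ≤ k + 2 := by
    rw [lt_max_iff, lt_min_iff] at hlo
    rw [max_lt_iff, min_lt_iff] at hhi
    constructor
    · rcases hlo with hk_one | ⟨hkz, -⟩
      · obtain rfl : k = 0 := Nat.lt_one_iff.1 (by exact_mod_cast hk_one)
        simpa using hz
      · exact hkz.le
    · rcases hhi.2 with hzk | hnk
      · linarith
      · have hnk : (n : ℝ) < k + 1 := by linarith
        have hnk : (n : ℝ) ≤ k := by exact_mod_cast Nat.lt_succ_iff.1 (by exact_mod_cast hnk)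
        linarith
  rw [le_div_iff₀ hδ, div_le_iff₀ hδ] at hbounds
  simp only [meshPoint]
  push_cast
  exact ⟨by linarith [hbounds.1], by linarith [hbounds.2]⟩

lemma continuous_meshCutoff (α δ : ℝ) (k : ℕ) : Continuous (meshCutoff α δ k) :=
  (continuous_plateau _ _).comp (by fun_prop)

lemma meshCutoff_mem_Icc (α δ : ℝ) (k : ℕ) (x : ℝ) : meshCutoff α δ k x ∈ Icc (0 : ℝ) 1 :=
  ⟨plateau_nonneg (by linarith) _, plateau_le_one _ _ _⟩

lemma sum_sq_meshCutoff_le_five (α δ : ℝ) (n : ℕ) (x : ℝ) :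
    ∑ k ∈ Finset.range n, meshCutoff α δ k x ^ 2 ≤ 5 := by
  refine (Finset.sum_le_sum fun k _ => ?_).trans (sum_plateau_le_five n ((x - α) / δ))
  exact pow_le_of_le_one (meshCutoff_mem_Icc α δ k x).1 (meshCutoff_mem_Icc α δ k x).2 two_ne_zero

lemma meshCutoff_eq_one (hδ : 0 < δ)
    (hx : x ∈ Icc (meshPoint α δ k - δ) (meshPoint α δ (k + 2) + δ)) :
    meshCutoff α δ k x = 1 := by
  simp only [meshPoint] at hx
  push_cast at hx
  refine plateau_eq_one ⟨?_, ?_⟩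
  · rw [le_div_iff₀ hδ]; linarith [hx.1]
  · rw [div_le_iff₀ hδ]; linarith [hx.2]

lemma abs_sub_lt_of_meshCutoff_ne_zero (hδ : 0 < δ) (hne : meshCutoff α δ k x ≠ 0) :
    |meshPoint α δ (k + 1) - x| < 3 * δ := by
  obtain ⟨hlo, hhi⟩ := mem_Ioo_of_plateau_ne_zero (by linarith) hne
  rw [lt_div_iff₀ hδ] at hlo
  rw [div_lt_iff₀ hδ] at hhi
  simp only [meshPoint]
  push_cast
  exact abs_lt.2 ⟨by linarith, by linarith⟩

lemma sum_second_difference (g : ℕ → ℝ) (n : ℕ) :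
    ∑ k ∈ Finset.range n, (g k + g (k + 2) - 2 * g (k + 1)) =
      (g (n + 1) - g n) - (g 1 - g 0) := by
  rw [← Finset.sum_range_sub (fun k => g (k + 1) - g k) n]
  exact Finset.sum_congr rfl fun k _ => by ring

lemma tendsto_sum_second_difference_meshPoint (hαβ : α < β) (hf : ContinuousOn f (Icc α β)) :
    Tendsto (fun n : ℕ => ∑ k ∈ Finset.range (n + 1),
      (f (meshPoint α ((β - α) / (n + 2)) k) + f (meshPoint α ((β - α) / (n + 2)) (k + 2)) -
        2 * f (meshPoint α ((β - α) / (n + 2)) (k + 1)))) atTop (𝓝 0) := by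
  let δ : ℕ → ℝ := fun n => (β - α) / (n + 2)
  have hδ : Tendsto δ atTop (𝓝 0) := tendsto_meshStep α β
  have hδ_mem : ∀ n, δ n ∈ Icc 0 (β - α) := fun n =>
    ⟨div_nonneg (by linarith) (by positivity),
      div_le_self (by linarith) (by linarith [n.cast_nonneg (α := ℝ)])⟩
  have hleft : Tendsto (fun n => f (α + δ n)) atTop (𝓝 (f α)) :=
    (hf α (left_mem_Icc.2 hαβ.le)).tendsto.comp <| tendsto_nhdsWithin_iff.2
      ⟨by simpa using hδ.const_add α, .of_forall fun n =>
        ⟨by linarith [(hδ_mem n).1], by linarith [(hδ_mem n).2]⟩⟩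
  have hright : Tendsto (fun n => f (β - δ n)) atTop (𝓝 (f β)) :=
    (hf β (right_mem_Icc.2 hαβ.le)).tendsto.comp <| tendsto_nhdsWithin_iff.2
      ⟨by simpa using hδ.const_sub β, .of_forall fun n =>
        ⟨by linarith [(hδ_mem n).2], by linarith [(hδ_mem n).1]⟩⟩
  have hends := (hright.const_sub (f β)).sub (hleft.sub_const (f α))
  rw [sub_self, sub_self, sub_zero] at hends
  refine hends.congr fun n => ?_
  rw [sum_second_difference fun k => f (meshPoint α (δ n) k)]
  have hfirst : meshPoint α (δ n) 1 = α + δ n := by rw [meshPoint_succ, meshPoint_zero]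
  have hlast : meshPoint α (δ n) (n + 1 + 1) = β := meshPoint_last α β n
  have hpenultimate : meshPoint α (δ n) (n + 1) = β - δ n :=
    eq_sub_of_add_eq (by rw [← meshPoint_succ, hlast])
  rw [hfirst, hlast, hpenultimate, meshPoint_zero]

lemma meshPoint_mem_of_le (hI : I.OrdConnected) (hδ : 0 < δ) (hα : α ∈ I)
    (hn : meshPoint α δ n ∈ I) (hk : k ≤ n) : meshPoint α δ k ∈ I :=
  hI.out hα hn (meshPoint_mem_Icc hδ hk)

lemma meshPoint_succ_mem_Ioo (hδ : 0 < δ) (hk : k ∈ Finset.range (n + 1)) :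
    meshPoint α δ (k + 1) ∈ Ioo α (meshPoint α δ (n + 2)) :=
  ⟨(meshPoint_zero α δ).symm.trans_lt (strictMono_meshPoint hδ k.succ_pos),
    strictMono_meshPoint hδ (by simpa using Finset.mem_range.1 hk)⟩

lemma bregman_meshPoint_le (hf : ConvexOn ℝ I f) (hδ : 0 < δ)
    (hleft : meshPoint α δ k ∈ I) (hright : meshPoint α δ (k + 2) ∈ I)
    (hx : x ∈ Icc (meshPoint α δ k) (meshPoint α δ (k + 2))) :
    bregman f (meshPoint α δ (k + 1)) x ≤
      f (meshPoint α δ k) + f (meshPoint α δ (k + 2)) - 2 * f (meshPoint α δ (k + 1)) := by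
  have hc : meshPoint α δ (k + 1) ∈ interior I :=
    mem_interior_of_lt_of_lt hf.1.ordConnected hleft hright
      (strictMono_meshPoint hδ k.lt_succ_self) (strictMono_meshPoint hδ (k + 1).lt_succ_self)
  have hk : meshPoint α δ k = meshPoint α δ (k + 1) - δ :=
    eq_sub_of_add_eq (meshPoint_succ α δ k).symm
  rw [hk, meshPoint_succ α δ (k + 1)] at hx ⊢
  exact bregman_le_second_difference hf hc (hk ▸ hleft) (meshPoint_succ α δ (k + 1) ▸ hright) hx

lemma second_difference_meshPoint_nonneg (hf : ConvexOn ℝ I f) (hδ : 0 < δ)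
    (hleft : meshPoint α δ k ∈ I) (hright : meshPoint α δ (k + 2) ∈ I) :
    0 ≤ f (meshPoint α δ k) + f (meshPoint α δ (k + 2)) - 2 * f (meshPoint α δ (k + 1)) :=
  (bregman_self f (meshPoint α δ (k + 1))).symm.trans_le <| bregman_meshPoint_le hf hδ hleft hright
    ⟨(strictMono_meshPoint hδ).monotone (by lia), (strictMono_meshPoint hδ).monotone (by lia)⟩

lemma sum_sq_meshCutoff_mul_sub_le (hδ : 0 < δ)
    (hφ : ∀ k ∈ Finset.range n, |meshPoint α δ (k + 1) - x| < 3 * δ →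
      |φ x - φ (meshPoint α δ (k + 1))| ≤ ε) :
    ∑ k ∈ Finset.range n, (meshCutoff α δ k x * (φ x - φ (meshPoint α δ (k + 1)))) ^ 2 ≤
      5 * ε ^ 2 := by
  calc ∑ k ∈ Finset.range n, (meshCutoff α δ k x * (φ x - φ (meshPoint α δ (k + 1)))) ^ 2
      ≤ ∑ k ∈ Finset.range n, meshCutoff α δ k x ^ 2 * ε ^ 2 := by
        refine Finset.sum_le_sum fun k hk => ?_
        rcases eq_or_ne (meshCutoff α δ k x) 0 with hzero | hne
        · simp [hzero]
        · rw [mul_pow]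
          gcongr 1
          exact sq_le_sq' (abs_le.1 (hφ k hk (abs_sub_lt_of_meshCutoff_ne_zero hδ hne))).1
            (abs_le.1 (hφ k hk (abs_sub_lt_of_meshCutoff_ne_zero hδ hne))).2
    _ ≤ 5 * ε ^ 2 := by
        rw [← Finset.sum_mul]
        gcongr
        exact sum_sq_meshCutoff_le_five α δ n x

/-- The function `φ - φ (t_{k+1})`, for the `k`-th mesh cell `[t_k, t_{k+2}]`, cut off so that it
vanishes on a neighbourhood of that cell. -/
noncomputable def meshTail (φ : ℝ → ℝ) (α δ : ℝ) (k : ℕ) (x : ℝ) : ℝ :=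
  (1 - meshCutoff α δ k x) * (φ x - φ (meshPoint α δ (k + 1)))

lemma continuousOn_meshTail (hφ : ContinuousOn φ I) (α δ : ℝ) (k : ℕ) :
    ContinuousOn (meshTail φ α δ k) I :=
  (continuousOn_const.sub (continuous_meshCutoff α δ k).continuousOn).mul
    (hφ.sub continuousOn_const)

lemma meshTail_eq_zero (hδ : 0 < δ)
    (hx : x ∈ Icc (meshPoint α δ k - δ) (meshPoint α δ (k + 2) + δ)) : meshTail φ α δ k x = 0 := by
  rw [meshTail, meshCutoff_eq_one hδ hx, sub_self, zero_mul]

lemma meshTail_isBigO (hφ : φ =O[𝓟 I] growthWeight f) (α δ : ℝ) (k : ℕ) :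
    meshTail φ α δ k =O[𝓟 I] growthWeight f := by
  have hone : (fun _ => (1 : ℝ)) =O[𝓟 I] growthWeight f :=
    isBigO_of_le _ fun x => by
      rw [norm_one]
      exact (le_max_left _ _).trans (le_abs_self _)
  have hcutoff : (fun x => 1 - meshCutoff α δ k x) =O[𝓟 I] fun _ => (1 : ℝ) :=
    isBigO_of_le _ fun x => by
      have hmem := meshCutoff_mem_Icc α δ k x
      rw [norm_one, Real.norm_eq_abs, abs_le]
      constructor <;> linarith [hmem.1, hmem.2]
  have hconst : (fun _ => φ (meshPoint α δ (k + 1))) =O[𝓟 I] growthWeight f :=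
    (isBigO_const_one ℝ _ _).trans hone
  exact (hcutoff.mul (hφ.sub hconst)).congr_right fun x => one_mul _

end Mesh

section FunctionalCalculus

variable {𝓗 : Type*} [NormedAddCommGroup 𝓗] [InnerProductSpace ℂ 𝓗] [CompleteSpace 𝓗]
  {κ : Type*} {S : 𝓗 →L[ℂ] 𝓗} {a b g p w : ℝ → ℝ}

lemma inner_cfc_left (a : ℝ → ℝ) (S : 𝓗 →L[ℂ] 𝓗) (x y : 𝓗) :
    ⟪cfc a S x, y⟫_ℂ = ⟪x, cfc a S y⟫_ℂ :=
  (cfc_predicate a S : IsSelfAdjoint (cfc a S)).isSymmetric x y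

lemma cfc_mul_apply (ha : ContinuousOn a (spectrum ℝ S)) (hb : ContinuousOn b (spectrum ℝ S))
    (x : 𝓗) : cfc (fun t => a t * b t) S x = cfc a S (cfc b S x) := by
  rw [cfc_mul a b S ha hb]
  rfl

lemma cfc_const_apply (hS : IsSelfAdjoint S) (c : ℝ) (x : 𝓗) :
    cfc (fun _ => c) S x = (c : ℂ) • x := by
  rw [cfc_const c S hS, Algebra.algebraMap_eq_smul_one]
  simp

lemma sum_cfc_apply {s : Finset κ} {a : κ → ℝ → ℝ}
    (ha : ∀ k ∈ s, ContinuousOn (a k) (spectrum ℝ S)) (x : 𝓗) :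
    ∑ k ∈ s, cfc (a k) S x = cfc (fun t => ∑ k ∈ s, a k t) S x := by
  rw [← Finset.sum_fn, cfc_sum a S s ha, sum_apply]

lemma reApplyInnerSelf_cfc_mono (ha : ContinuousOn a (spectrum ℝ S))
    (hb : ContinuousOn b (spectrum ℝ S)) (hab : ∀ t ∈ spectrum ℝ S, a t ≤ b t) (x : 𝓗) :
    (cfc a S).reApplyInnerSelf x ≤ (cfc b S).reApplyInnerSelf x := by
  have hle : cfc a S ≤ cfc b S := cfc_mono hab ha hb
  have hnonneg := (ContinuousLinearMap.le_def _ _).1 hle |>.re_inner_nonneg_left x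
  rw [sub_apply, inner_sub_left, map_sub] at hnonneg
  exact sub_nonneg.1 hnonneg

lemma reApplyInnerSelf_cfc_const_mul (ha : ContinuousOn a (spectrum ℝ S)) (c : ℝ) (x : 𝓗) :
    (cfc (fun t => c * a t) S).reApplyInnerSelf x = c * (cfc a S).reApplyInnerSelf x := by
  rw [cfc_const_mul c a S ha]
  simp only [ContinuousLinearMap.reApplyInnerSelf_apply, smul_apply]
  rw [RCLike.real_smul_eq_coe_smul (K := ℂ), inner_smul_left]
  simp

lemma norm_cfc_apply_sq (ha : ContinuousOn a (spectrum ℝ S)) (x : 𝓗) :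
    ‖cfc a S x‖ ^ 2 = (cfc (fun t => a t ^ 2) S).reApplyInnerSelf x := by
  simp_rw [pow_two (a _)]
  rw [ContinuousLinearMap.reApplyInnerSelf_apply, cfc_mul_apply ha ha, inner_cfc_left]
  exact (inner_self_eq_norm_sq (𝕜 := ℂ) (cfc a S x)).symm

lemma sum_norm_cfc_apply_sq_le (hS : IsSelfAdjoint S) {s : Finset κ} {a : κ → ℝ → ℝ} {C : ℝ}
    (ha : ∀ k ∈ s, ContinuousOn (a k) (spectrum ℝ S))
    (hC : ∀ t ∈ spectrum ℝ S, ∑ k ∈ s, a k t ^ 2 ≤ C) (x : 𝓗) :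
    ∑ k ∈ s, ‖cfc (a k) S x‖ ^ 2 ≤ C * ‖x‖ ^ 2 := by
  have ha_sq : ∀ k ∈ s, ContinuousOn (fun t => a k t ^ 2) (spectrum ℝ S) :=
    fun k hk => (ha k hk).pow 2
  calc ∑ k ∈ s, ‖cfc (a k) S x‖ ^ 2
      = (cfc (fun t => ∑ k ∈ s, a k t ^ 2) S).reApplyInnerSelf x := by
        rw [Finset.sum_congr rfl fun k hk => norm_cfc_apply_sq (ha k hk) x,
          ContinuousLinearMap.reApplyInnerSelf_apply,
          ← sum_cfc_apply ha_sq, sum_inner, map_sum]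
        rfl
    _ ≤ (cfc (fun _ => C) S).reApplyInnerSelf x :=
        reApplyInnerSelf_cfc_mono (continuousOn_finsetSum _ ha_sq)
          continuousOn_const hC x
    _ = C * ‖x‖ ^ 2 := by
        rw [ContinuousLinearMap.reApplyInnerSelf_apply, cfc_const_apply hS, inner_smul_left]
        simp [inner_self_eq_norm_sq_to_K, ← Complex.ofReal_pow]

lemma reApplyInnerSelf_cfc_cfc_apply_le (hg : ContinuousOn g (spectrum ℝ S))
    (hp : ContinuousOn p (spectrum ℝ S)) {C : ℝ} (hC : ∀ t ∈ spectrum ℝ S, p t ≠ 0 → g t ≤ C)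
    (x : 𝓗) : (cfc g S).reApplyInnerSelf (cfc p S x) ≤ C * ‖cfc p S x‖ ^ 2 := by
  have hgp : ContinuousOn (fun t => g t * p t) (spectrum ℝ S) := hg.mul hp
  have hp_sq : ContinuousOn (fun t => p t ^ 2) (spectrum ℝ S) := hp.pow 2
  calc (cfc g S).reApplyInnerSelf (cfc p S x)
      = (cfc (fun t => p t * (g t * p t)) S).reApplyInnerSelf x := by
        simp only [ContinuousLinearMap.reApplyInnerSelf_apply]
        rw [cfc_mul_apply hp hgp, cfc_mul_apply hg hp, inner_cfc_left p]
    _ ≤ (cfc (fun t => C * p t ^ 2) S).reApplyInnerSelf x := by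
        refine reApplyInnerSelf_cfc_mono (hp.mul hgp) (continuousOn_const.mul hp_sq)
          (fun t ht => ?_) x
        by_cases hpt : p t = 0
        · simp [hpt]
        · calc p t * (g t * p t) = g t * p t ^ 2 := by ring
            _ ≤ C * p t ^ 2 := by gcongr; exact hC t ht hpt
    _ = C * ‖cfc p S x‖ ^ 2 := by
        rw [reApplyInnerSelf_cfc_const_mul hp_sq, norm_cfc_apply_sq hp]

lemma norm_inner_cfc_apply_le_sqrt_mul_sqrt (hw : ContinuousOn w (spectrum ℝ S))
    (ha : ContinuousOn a (spectrum ℝ S)) (hb : ContinuousOn b (spectrum ℝ S))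
    (hwa : ∀ t ∈ spectrum ℝ S, |w t| ≤ a t) (hwb : ∀ t ∈ spectrum ℝ S, |w t| ≤ b t) (x y : 𝓗) :
    ‖⟪cfc w S x, y⟫_ℂ‖ ≤
      √((cfc a S).reApplyInnerSelf x) * √((cfc b S).reApplyInnerSelf y) := by
  -- `w = √|w| * r` with `r ^ 2 = |w|`; `Real.sqrt` vanishes on negative numbers
  let r : ℝ → ℝ := fun t => √(w t) - √(-w t)
  have hr : ContinuousOn r (spectrum ℝ S) := hw.sqrt.sub hw.neg.sqrt
  have hq : ContinuousOn (fun t => √|w t|) (spectrum ℝ S) := hw.abs.sqrt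
  have hfactor : ∀ t, w t = √|w t| * r t ∧ r t ^ 2 = |w t| := fun t => by
    rcases le_total 0 (w t) with h | h
    · simp [r, abs_of_nonneg h, Real.sqrt_eq_zero_of_nonpos (neg_nonpos.2 h), h]
    · simp [r, abs_of_nonpos h, Real.sqrt_eq_zero_of_nonpos h, h]
  have hxr : ‖cfc r S x‖ ^ 2 ≤ (cfc a S).reApplyInnerSelf x := by
    rw [norm_cfc_apply_sq hr]
    exact reApplyInnerSelf_cfc_mono (hr.pow 2) ha
      (fun t ht => (hfactor t).2.trans_le (hwa t ht)) x
  have hyq : ‖cfc (fun t => √|w t|) S y‖ ^ 2 ≤ (cfc b S).reApplyInnerSelf y := by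
    rw [norm_cfc_apply_sq hq]
    exact reApplyInnerSelf_cfc_mono (hq.pow 2) hb
      (fun t ht => (Real.sq_sqrt (abs_nonneg _)).trans_le (hwb t ht)) y
  have hw_eq : cfc w S x = cfc (fun t => √|w t|) S (cfc r S x) := by
    rw [← cfc_mul_apply hq hr, ← funext fun t => (hfactor t).1]
  rw [hw_eq, inner_cfc_left]
  exact (norm_inner_le_norm _ _).trans
    (mul_le_mul (Real.le_sqrt_of_sq_le hxr) (Real.le_sqrt_of_sq_le hyq) (norm_nonneg _)
      (Real.sqrt_nonneg _))

lemma norm_sum_inner_cfc_apply_le (hS : IsSelfAdjoint S) {s : Finset κ} {a : κ → ℝ → ℝ} {C : ℝ}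
    (hC : 0 ≤ C) (ha : ∀ k ∈ s, ContinuousOn (a k) (spectrum ℝ S))
    (haC : ∀ t ∈ spectrum ℝ S, ∑ k ∈ s, a k t ^ 2 ≤ C ^ 2) (u : κ → 𝓗) (y : 𝓗) :
    ‖∑ k ∈ s, ⟪cfc (a k) S (u k), y⟫_ℂ‖ ≤ √(∑ k ∈ s, ‖u k‖ ^ 2) * (C * ‖y‖) := by
  calc ‖∑ k ∈ s, ⟪cfc (a k) S (u k), y⟫_ℂ‖
      ≤ ∑ k ∈ s, ‖u k‖ * ‖cfc (a k) S y‖ := norm_sum_le_of_le _ fun k _ => by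
        rw [inner_cfc_left]
        exact norm_inner_le_norm _ _
    _ ≤ √(∑ k ∈ s, ‖u k‖ ^ 2) * √(∑ k ∈ s, ‖cfc (a k) S y‖ ^ 2) :=
        Real.sum_mul_le_sqrt_mul_sqrt _ _ _
    _ ≤ √(∑ k ∈ s, ‖u k‖ ^ 2) * (C * ‖y‖) := by
        gcongr
        refine Real.sqrt_le_iff.2 ⟨by positivity, ?_⟩
        rw [mul_pow]
        exact sum_norm_cfc_apply_sq_le hS ha haC y

lemma norm_inner_cfc_apply_le_mul_sqrt_mul_sqrt {K : ℝ} (hK : 0 ≤ K)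
    (hw : ContinuousOn w (spectrum ℝ S)) (ha : ContinuousOn a (spectrum ℝ S))
    (hb : ContinuousOn b (spectrum ℝ S)) (hwa : ∀ t ∈ spectrum ℝ S, |w t| ≤ K * a t)
    (hwb : ∀ t ∈ spectrum ℝ S, |w t| ≤ K * b t) (x y : 𝓗) :
    ‖⟪cfc w S x, y⟫_ℂ‖ ≤
      K * (√((cfc a S).reApplyInnerSelf x) * √((cfc b S).reApplyInnerSelf y)) := by
  have hKa : ContinuousOn (fun t => K * a t) (spectrum ℝ S) := continuousOn_const.mul ha
  have hKb : ContinuousOn (fun t => K * b t) (spectrum ℝ S) := continuousOn_const.mul hb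
  refine (norm_inner_cfc_apply_le_sqrt_mul_sqrt hw hKa hKb hwa hwb x y).trans_eq ?_
  rw [reApplyInnerSelf_cfc_const_mul ha, reApplyInnerSelf_cfc_const_mul hb, Real.sqrt_mul hK,
    Real.sqrt_mul hK, mul_mul_mul_comm, Real.mul_self_sqrt hK]

lemma norm_inner_cfc_sub_sum_le (hS : IsSelfAdjoint S) {s : Finset κ} {φ : ℝ → ℝ}
    {χ : κ → ℝ → ℝ} {c : κ → ℝ} {C : ℝ} (hC : 0 ≤ C) (hφ : ContinuousOn φ (spectrum ℝ S))
    (hχ : ∀ k ∈ s, ContinuousOn (χ k) (spectrum ℝ S))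
    (hχC : ∀ t ∈ spectrum ℝ S, ∑ k ∈ s, (χ k t * (φ t - c k)) ^ 2 ≤ C ^ 2) (u : κ → 𝓗) (y : 𝓗) :
    ‖⟪cfc φ S (∑ k ∈ s, u k), y⟫_ℂ - ∑ k ∈ s, c k * ⟪u k, y⟫_ℂ
        - ∑ k ∈ s, ⟪cfc (fun t => (1 - χ k t) * (φ t - c k)) S (u k), y⟫_ℂ‖ ≤
      √(∑ k ∈ s, ‖u k‖ ^ 2) * (C * ‖y‖) := by
  have hsub : ∀ k, ContinuousOn (fun t => φ t - c k) (spectrum ℝ S) :=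
    fun k => hφ.sub continuousOn_const
  have hnear : ∀ k ∈ s, ContinuousOn (fun t => χ k t * (φ t - c k)) (spectrum ℝ S) :=
    fun k hk => (hχ k hk).mul (hsub k)
  have hfar : ∀ k ∈ s, ContinuousOn (fun t => (1 - χ k t) * (φ t - c k)) (spectrum ℝ S) :=
    fun k hk => (continuousOn_const.sub (hχ k hk)).mul (hsub k)
  have hsplit : ∀ k ∈ s, cfc φ S = cfc (fun _ => c k) S +
      (cfc (fun t => χ k t * (φ t - c k)) S +
        cfc (fun t => (1 - χ k t) * (φ t - c k)) S) := fun k hk => by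
    rw [← cfc_add S _ _ (hnear k hk) (hfar k hk),
      ← cfc_add S _ (fun t => χ k t * (φ t - c k) + (1 - χ k t) * (φ t - c k))
        continuousOn_const ((hnear k hk).add (hfar k hk))]
    congr 1 with t
    ring
  have hsum : ⟪cfc φ S (∑ k ∈ s, u k), y⟫_ℂ - ∑ k ∈ s, c k * ⟪u k, y⟫_ℂ
        - ∑ k ∈ s, ⟪cfc (fun t => (1 - χ k t) * (φ t - c k)) S (u k), y⟫_ℂ =
      ∑ k ∈ s, ⟪cfc (fun t => χ k t * (φ t - c k)) S (u k), y⟫_ℂ := by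
    rw [map_sum, sum_inner, ← Finset.sum_sub_distrib, ← Finset.sum_sub_distrib]
    refine Finset.sum_congr rfl fun k hk => ?_
    rw [hsplit k hk, add_apply, add_apply, cfc_const_apply hS, inner_add_left, inner_add_left,
      inner_smul_left, Complex.conj_ofReal]
    ring
  rw [hsum]
  exact norm_sum_inner_cfc_apply_le hS hC hnear hχC u y

end FunctionalCalculus

section WeakLimit

open Set Asymptotics

variable {𝓗 : Type*} [NormedAddCommGroup 𝓗] [InnerProductSpace ℂ 𝓗] [CompleteSpace 𝓗]
  {ι : Type*} {l : Filter ι} {I : Set ℝ} {f φ p w : ℝ → ℝ} {H : ι → 𝓗 →L[ℂ] 𝓗} {S T : 𝓗 →L[ℂ] 𝓗}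
  {α β δ ρ : ℝ}

lemma tendsto_zero_of_forall_exists_majorant {E : Type*} [SeminormedAddCommGroup E] {F : ι → E}
    (h : ∀ ε > 0, ∃ M : ι → ℝ, ∃ m < ε, Tendsto M l (𝓝 m) ∧ ∀ i, ‖F i‖ ≤ M i) :
    Tendsto F l (𝓝 0) := by
  refine NormedAddGroup.tendsto_nhds_zero.2 fun ε hε => ?_
  obtain ⟨M, m, hm, hM, hFM⟩ := h ε hε
  exact (hM.eventually_lt_const hm).mono fun i hi => (hFM i).trans_lt hi

/-- The self-adjoint operators `H i` and `T` have spectra in `I`, and along `l` both `H i` and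
`f (H i)` converge, in the weak operator topology, to `T` and `f T`. -/
structure CfcWeakLimit (l : Filter ι) (I : Set ℝ) (f : ℝ → ℝ) (H : ι → 𝓗 →L[ℂ] 𝓗)
    (T : 𝓗 →L[ℂ] 𝓗) : Prop where
  isSelfAdjoint : ∀ i, IsSelfAdjoint (H i)
  spectrum_subset : ∀ i, spectrum ℝ (H i) ⊆ I
  isSelfAdjoint_limit : IsSelfAdjoint T
  spectrum_limit_subset : spectrum ℝ T ⊆ I
  tendsto_inner : ∀ x y : 𝓗, Tendsto (fun i => ⟪H i x, y⟫_ℂ) l (𝓝 ⟪T x, y⟫_ℂ)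
  tendsto_inner_cfc : ∀ x y : 𝓗,
    Tendsto (fun i => ⟪cfc f (H i) x, y⟫_ℂ) l (𝓝 ⟪cfc f T x, y⟫_ℂ)

lemma inner_cfc_bregman_apply (hS : IsSelfAdjoint S) (hf : ContinuousOn f (spectrum ℝ S)) (c : ℝ)
    (x y : 𝓗) :
    ⟪cfc (bregman f c) S x, y⟫_ℂ = ⟪cfc f S x, y⟫_ℂ - f c * ⟪x, y⟫_ℂ -
      derivWithin f (Ioi c) c * (⟪S x, y⟫_ℂ - c * ⟪x, y⟫_ℂ) := by
  have hcfc : cfc (bregman f c) S = cfc f S - cfc (fun _ => f c) S -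
      derivWithin f (Ioi c) c • (cfc (fun t : ℝ => t) S - cfc (fun _ => c) S) := by
    rw [← cfc_sub f _ S hf, ← cfc_sub (fun t : ℝ => t) _ S, ← cfc_const_mul (R := ℝ) _ _ S,
      ← cfc_sub (R := ℝ) _ _ S]
    rfl
  simp only [hcfc, cfc_id' ℝ S hS, sub_apply, smul_apply,
    RCLike.real_smul_eq_coe_smul (K := ℂ), inner_sub_left, inner_smul_left,
    cfc_const_apply hS, Complex.conj_ofReal, Complex.coe_algebraMap]

lemma CfcWeakLimit.tendsto_reApplyInnerSelf_cfc_bregman (h : CfcWeakLimit l I f H T)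
    (hf : ContinuousOn f I) (c : ℝ) (x : 𝓗) :
    Tendsto (fun i => (cfc (bregman f c) (H i)).reApplyInnerSelf x) l
      (𝓝 ((cfc (bregman f c) T).reApplyInnerSelf x)) := by
  simp only [ContinuousLinearMap.reApplyInnerSelf_apply,
    inner_cfc_bregman_apply h.isSelfAdjoint_limit (hf.mono h.spectrum_limit_subset),
    inner_cfc_bregman_apply (h.isSelfAdjoint _) (hf.mono (h.spectrum_subset _))]
  exact (Complex.continuous_re.tendsto _).comp (((h.tendsto_inner_cfc x x).sub_const _).sub
    (((h.tendsto_inner x x).sub_const _).const_mul _))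

lemma sum_cfc_meshHat_apply (hS : IsSelfAdjoint S) (α δ : ℝ) (n : ℕ) (v : 𝓗) :
    ∑ k ∈ Finset.range (n + 1), cfc (meshHat α δ n k) S v = v := by
  rw [sum_cfc_apply fun k _ => (continuous_meshHat α δ n k).continuousOn]
  simp [sum_meshHat, cfc_const_apply hS]

lemma sum_norm_cfc_meshHat_apply_sq_le (hS : IsSelfAdjoint S) (α δ : ℝ) (n : ℕ) (v : 𝓗) :
    ∑ k ∈ Finset.range (n + 1), ‖cfc (meshHat α δ n k) S v‖ ^ 2 ≤ ‖v‖ ^ 2 :=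
  (sum_norm_cfc_apply_sq_le hS (fun k _ => (continuous_meshHat α δ n k).continuousOn)
    (fun t _ => sum_sq_meshHat_le_one α δ n t) v).trans_eq (one_mul _)

lemma reApplyInnerSelf_cfc_bregman_cfc_meshHat_le (hSI : spectrum ℝ S ⊆ I)
    (hf : ConvexOn ℝ I f) (hfc : ContinuousOn f I) (hδ : 0 < δ) {n k : ℕ}
    (hk : k ∈ Finset.range (n + 1)) (hleft : meshPoint α δ k ∈ I)
    (hright : meshPoint α δ (k + 2) ∈ I) (hp : ContinuousOn p (spectrum ℝ S))
    (hp_zero : ∀ t ∈ spectrum ℝ S, t ∉ Icc α (meshPoint α δ (n + 2)) → p t = 0) (v : 𝓗) :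
    (cfc (bregman f (meshPoint α δ (k + 1))) S).reApplyInnerSelf
        (cfc (meshHat α δ n k) S (cfc p S v)) ≤
      (f (meshPoint α δ k) + f (meshPoint α δ (k + 2)) - 2 * f (meshPoint α δ (k + 1))) *
        ‖cfc (meshHat α δ n k) S (cfc p S v)‖ ^ 2 := by
  have hhat : ContinuousOn (meshHat α δ n k) (spectrum ℝ S) :=
    (continuous_meshHat α δ n k).continuousOn
  rw [← cfc_mul_apply hhat hp]
  refine reApplyInnerSelf_cfc_cfc_apply_le ((continuousOn_bregman hfc _).mono hSI)
    (hhat.mul hp) (fun t ht hne => bregman_meshPoint_le hf hδ hleft hright ?_) v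
  exact mem_Icc_of_meshHat_ne_zero hδ hk
    (not_imp_comm.1 (hp_zero t ht) (right_ne_zero_of_mul hne)) (left_ne_zero_of_mul hne)

lemma sum_sqrt_reApplyInnerSelf_cfc_bregman_le (hS : IsSelfAdjoint S) (hSI : spectrum ℝ S ⊆ I)
    (hf : ConvexOn ℝ I f) (hfc : ContinuousOn f I) {n : ℕ} (hδ : 0 < δ)
    (hα : α ∈ I) (hlast : meshPoint α δ (n + 2) ∈ I) (hp : ContinuousOn p (spectrum ℝ S))
    (hp_zero : ∀ t ∈ spectrum ℝ S, t ∉ Icc α (meshPoint α δ (n + 2)) → p t = 0) (v : 𝓗) :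
    ∑ k ∈ Finset.range (n + 1), √((cfc (bregman f (meshPoint α δ (k + 1))) S).reApplyInnerSelf
        (cfc (meshHat α δ n k) S (cfc p S v))) ≤
      √(∑ k ∈ Finset.range (n + 1), (f (meshPoint α δ k) + f (meshPoint α δ (k + 2)) -
        2 * f (meshPoint α δ (k + 1)))) * ‖cfc p S v‖ := by
  let Δ : ℕ → ℝ := fun k =>
    f (meshPoint α δ k) + f (meshPoint α δ (k + 2)) - 2 * f (meshPoint α δ (k + 1))
  let u : ℕ → 𝓗 := fun k => cfc (meshHat α δ n k) S (cfc p S v)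
  have hmem : ∀ k ∈ Finset.range (n + 1), meshPoint α δ k ∈ I ∧ meshPoint α δ (k + 2) ∈ I :=
    fun k hk =>
      have hkn : k + 2 ≤ n + 2 := by simpa using Finset.mem_range_succ_iff.1 hk
      ⟨meshPoint_mem_of_le hf.1.ordConnected hδ hα hlast (le_self_add.trans hkn),
        meshPoint_mem_of_le hf.1.ordConnected hδ hα hlast hkn⟩
  calc ∑ k ∈ Finset.range (n + 1),
        √((cfc (bregman f (meshPoint α δ (k + 1))) S).reApplyInnerSelf (u k))
      ≤ ∑ k ∈ Finset.range (n + 1), √(Δ k) * ‖u k‖ := by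
        refine Finset.sum_le_sum fun k hk => ?_
        rw [← Real.sqrt_sq (norm_nonneg (u k)), ← Real.sqrt_mul' _ (sq_nonneg _)]
        exact Real.sqrt_le_sqrt (reApplyInnerSelf_cfc_bregman_cfc_meshHat_le hSI hf hfc hδ hk
          (hmem k hk).1 (hmem k hk).2 hp hp_zero v)
    _ ≤ √(∑ k ∈ Finset.range (n + 1), Δ k) * √(∑ k ∈ Finset.range (n + 1), ‖u k‖ ^ 2) := by
        refine (Real.sum_mul_le_sqrt_mul_sqrt _ _ _).trans_eq ?_
        rw [Finset.sum_congr rfl fun k hk => Real.sq_sqrt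
          (second_difference_meshPoint_nonneg hf hδ (hmem k hk).1 (hmem k hk).2)]
    _ ≤ √(∑ k ∈ Finset.range (n + 1), Δ k) * ‖cfc p S v‖ := by
        gcongr
        exact Real.sqrt_le_iff.2
          ⟨norm_nonneg _, sum_norm_cfc_meshHat_apply_sq_le hS α δ n (cfc p S v)⟩

lemma norm_inner_cfc_apply_le_sum_sqrt_mul_sqrt {K : ℝ} (hK : 0 ≤ K) (hSI : spectrum ℝ S ⊆ I)
    (hfc : ContinuousOn f I) (hwc : ContinuousOn w I) {κ : Type*} {s : Finset κ} {c : κ → ℝ} {d : ℝ}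
    (hwK : ∀ k ∈ s, ∀ x ∈ I, |w x| ≤ K * bregman f (c k) x)
    (hwd : ∀ x ∈ I, |w x| ≤ K * bregman f d x) (u : κ → 𝓗) (y : 𝓗) :
    ‖⟪cfc w S (∑ k ∈ s, u k), y⟫_ℂ‖ ≤
      K * ((∑ k ∈ s, √((cfc (bregman f (c k)) S).reApplyInnerSelf (u k))) *
        √((cfc (bregman f d) S).reApplyInnerSelf y)) := by
  have hcont : ∀ e, ContinuousOn (bregman f e) (spectrum ℝ S) :=
    fun e => (continuousOn_bregman hfc e).mono hSI
  rw [map_sum, sum_inner, Finset.sum_mul, Finset.mul_sum]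
  exact norm_sum_le_of_le _ fun k hk => norm_inner_cfc_apply_le_mul_sqrt_mul_sqrt hK
    (hwc.mono hSI) (hcont _) (hcont d) (fun t ht => hwK k hk t (hSI ht))
    (fun t ht => hwd t (hSI ht)) (u k) y

lemma tendsto_sum_sqrt_reApplyInnerSelf_cfc_bregman (hS : IsSelfAdjoint S)
    (hSI : spectrum ℝ S ⊆ I) (hf : ConvexOn ℝ I f) (hfc : ContinuousOn f I) (hα : α ∈ I)
    (hβ : β ∈ I) (hαβ : α < β) (hp : ContinuousOn p (spectrum ℝ S))
    (hp_zero : ∀ t ∈ spectrum ℝ S, t ∉ Icc α β → p t = 0) (v : 𝓗) :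
    Tendsto (fun n : ℕ => ∑ k ∈ Finset.range (n + 1),
      √((cfc (bregman f (meshPoint α ((β - α) / (n + 2)) (k + 1))) S).reApplyInnerSelf
        (cfc (meshHat α ((β - α) / (n + 2)) n k) S (cfc p S v)))) atTop (𝓝 0) := by
  have hmajorant := ((tendsto_sum_second_difference_meshPoint hαβ
    (hfc.mono (hf.1.ordConnected.out hα hβ))).sqrt).mul_const ‖cfc p S v‖
  rw [Real.sqrt_zero, zero_mul] at hmajorant
  refine squeeze_zero (fun n => by positivity) (fun n => ?_) hmajorant
  have hδ : 0 < (β - α) / (n + 2) := div_pos (sub_pos.2 hαβ) (by positivity)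
  exact sum_sqrt_reApplyInnerSelf_cfc_bregman_le hS hSI hf hfc hδ hα
    (by rwa [meshPoint_last]) hp (by rwa [meshPoint_last]) v

lemma CfcWeakLimit.tendsto_inner_cfc_cfc_apply_zero (h : CfcWeakLimit l I f H T)
    (hf : StrictConvexOn ℝ I f) (hfc : ContinuousOn f I) (hα : α ∈ I) (hβ : β ∈ I) (hαβ : α < β)
    (hρ : 0 < ρ) (hwc : ContinuousOn w I) (hw : w =O[𝓟 I] growthWeight f)
    (hw_zero : ∀ x ∈ I, x ∈ Icc (α - ρ) (β + ρ) → w x = 0) (hp : ContinuousOn p (spectrum ℝ T))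
    (hp_zero : ∀ t ∈ spectrum ℝ T, t ∉ Icc α β → p t = 0) (v y : 𝓗) :
    Tendsto (fun i => ⟪cfc w (H i) (cfc p T v), y⟫_ℂ) l (𝓝 0) := by
  obtain ⟨K, hK, hwK⟩ := exists_abs_le_mul_bregman hf hα hβ hαβ hρ hw hw_zero
  obtain ⟨d, hd⟩ := exists_between hαβ
  let δ : ℕ → ℝ := fun n => (β - α) / (n + 2)
  have hδ : ∀ n, 0 < δ n := fun n => div_pos (sub_pos.2 hαβ) (by positivity)
  let majorant : ℕ → (𝓗 →L[ℂ] 𝓗) → ℝ := fun n S =>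
    K * ((∑ k ∈ Finset.range (n + 1),
      √((cfc (bregman f (meshPoint α (δ n) (k + 1))) S).reApplyInnerSelf
        (cfc (meshHat α (δ n) n k) T (cfc p T v)))) * √((cfc (bregman f d) S).reApplyInnerSelf y))
  have hlimit_small : Tendsto (fun n => majorant n T) atTop (𝓝 0) := by
    simpa only [zero_mul, mul_zero] using ((tendsto_sum_sqrt_reApplyInnerSelf_cfc_bregman
      h.isSelfAdjoint_limit h.spectrum_limit_subset hf.convexOn hfc hα hβ hαβ hp hp_zero
        v).mul_const √((cfc (bregman f d) T).reApplyInnerSelf y)).const_mul K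
  refine tendsto_zero_of_forall_exists_majorant fun ε hε => ?_
  obtain ⟨n, hn⟩ := (hlimit_small.eventually_lt_const hε).exists
  refine ⟨fun i => majorant n (H i), majorant n T, hn, ?_, fun i => ?_⟩
  · exact ((tendsto_finsetSum _ fun k _ =>
      (h.tendsto_reApplyInnerSelf_cfc_bregman hfc _ _).sqrt).mul
        (h.tendsto_reApplyInnerSelf_cfc_bregman hfc _ _).sqrt).const_mul K
  · rw [← sum_cfc_meshHat_apply h.isSelfAdjoint_limit α (δ n) n (cfc p T v)]
    exact norm_inner_cfc_apply_le_sum_sqrt_mul_sqrt hK (h.spectrum_subset i) hfc hwc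
      (fun k hk => hwK _ (meshPoint_last α β n ▸ meshPoint_succ_mem_Ioo (hδ n) hk)) (hwK d hd) _ y

lemma CfcWeakLimit.tendsto_inner_cfc_meshTail (h : CfcWeakLimit l I f H T)
    (hf : StrictConvexOn ℝ I f) (hfc : ContinuousOn f I) (hφc : ContinuousOn φ I)
    (hφ : φ =O[𝓟 I] growthWeight f) (hδ : 0 < δ) {n k : ℕ} (hk : k ∈ Finset.range (n + 1))
    (hleft : meshPoint α δ k ∈ I) (hright : meshPoint α δ (k + 2) ∈ I)
    (hT : spectrum ℝ T ⊆ Icc α (meshPoint α δ (n + 2))) (v y : 𝓗) :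
    Tendsto (fun i => ⟪cfc (meshTail φ α δ k) (H i) (cfc (meshHat α δ n k) T v), y⟫_ℂ) l (𝓝 0) :=
  h.tendsto_inner_cfc_cfc_apply_zero hf hfc hleft hright
    (strictMono_meshPoint hδ (by lia)) hδ (continuousOn_meshTail hφc α δ k)
    (meshTail_isBigO hφ α δ k) (fun _ _ hx => meshTail_eq_zero hδ hx)
    (continuous_meshHat α δ n k).continuousOn
    (fun _ ht hnot => not_imp_comm.1 (mem_Icc_of_meshHat_ne_zero hδ hk (hT ht)) hnot) v y

lemma cfc_meshTail_cfc_meshHat_apply (hφ : ContinuousOn φ (spectrum ℝ S))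
    (hδ : 0 < δ) {n k : ℕ} (hk : k ∈ Finset.range (n + 1))
    (hS : spectrum ℝ S ⊆ Icc α (meshPoint α δ (n + 2))) (v : 𝓗) :
    cfc (meshTail φ α δ k) S (cfc (meshHat α δ n k) S v) = 0 := by
  have hzero : (spectrum ℝ S).EqOn
      (fun t => meshTail φ α δ k t * meshHat α δ n k t) fun _ => 0 := fun t ht => by
    rcases eq_or_ne (meshHat α δ n k t) 0 with hhat | hhat
    · exact mul_eq_zero_of_right _ hhat
    · have hmem := mem_Icc_of_meshHat_ne_zero hδ hk (hS ht) hhat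
      exact mul_eq_zero_of_left
        (meshTail_eq_zero hδ (Icc_subset_Icc (by linarith) (by linarith) hmem)) _
  rw [← cfc_mul_apply (continuousOn_meshTail hφ α δ k) (continuous_meshHat α δ n k).continuousOn,
    cfc_congr hzero, cfc_const_zero, zero_apply]

lemma norm_inner_cfc_sub_sum_meshPoint_le (hS : IsSelfAdjoint S)
    (hφ : ContinuousOn φ (spectrum ℝ S)) (hδ : 0 < δ) {n : ℕ} {ε : ℝ} (hε : 0 ≤ ε)
    (hosc : ∀ k ∈ Finset.range n, ∀ x ∈ spectrum ℝ S, |meshPoint α δ (k + 1) - x| < 3 * δ →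
      |φ x - φ (meshPoint α δ (k + 1))| ≤ ε) (u : ℕ → 𝓗) (y : 𝓗) :
    ‖⟪cfc φ S (∑ k ∈ Finset.range n, u k), y⟫_ℂ
        - ∑ k ∈ Finset.range n, φ (meshPoint α δ (k + 1)) * ⟪u k, y⟫_ℂ
        - ∑ k ∈ Finset.range n, ⟪cfc (meshTail φ α δ k) S (u k), y⟫_ℂ‖ ≤
      √(∑ k ∈ Finset.range n, ‖u k‖ ^ 2) * (3 * ε * ‖y‖) := by
  refine norm_inner_cfc_sub_sum_le (c := fun k => φ (meshPoint α δ (k + 1))) hS (by positivity) hφ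
    (fun k _ => (continuous_meshCutoff α δ k).continuousOn) (fun x hx => ?_) u y
  calc ∑ k ∈ Finset.range n, (meshCutoff α δ k x * (φ x - φ (meshPoint α δ (k + 1)))) ^ 2
      ≤ 5 * ε ^ 2 := sum_sq_meshCutoff_mul_sub_le hδ fun k hk => hosc k hk x hx
    _ ≤ (3 * ε) ^ 2 := by linarith [sq_nonneg ε, mul_pow 3 ε 2]

lemma CfcWeakLimit.norm_inner_cfc_sub_inner_cfc_le (h : CfcWeakLimit l I f H T)
    (hφ : ContinuousOn φ I) (hδ : 0 < δ) {n : ℕ} {ε : ℝ} (hε : 0 ≤ ε)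
    (hT : spectrum ℝ T ⊆ Icc α (meshPoint α δ (n + 2)))
    (hosc : ∀ k ∈ Finset.range (n + 1), ∀ x ∈ I, |meshPoint α δ (k + 1) - x| < 3 * δ →
      |φ x - φ (meshPoint α δ (k + 1))| ≤ ε) (v y : 𝓗) (i : ι) :
    ‖⟪cfc φ (H i) v, y⟫_ℂ - ⟪cfc φ T v, y⟫_ℂ‖ ≤
      ‖∑ k ∈ Finset.range (n + 1),
        ⟪cfc (meshTail φ α δ k) (H i) (cfc (meshHat α δ n k) T v), y⟫_ℂ‖ + 6 * ‖v‖ * ‖y‖ * ε := by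
  let u : ℕ → 𝓗 := fun k => cfc (meshHat α δ n k) T v
  have hv : ∑ k ∈ Finset.range (n + 1), u k = v :=
    sum_cfc_meshHat_apply h.isSelfAdjoint_limit α δ n v
  have hu : √(∑ k ∈ Finset.range (n + 1), ‖u k‖ ^ 2) ≤ ‖v‖ :=
    Real.sqrt_le_iff.2
      ⟨norm_nonneg _, sum_norm_cfc_meshHat_apply_sq_le h.isSelfAdjoint_limit α δ n v⟩
  have hscale := mul_le_mul_of_nonneg_right hu (show 0 ≤ 3 * ε * ‖y‖ by positivity)
  have hH := (norm_inner_cfc_sub_sum_meshPoint_le (h.isSelfAdjoint i)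
    (hφ.mono (h.spectrum_subset i)) hδ hε
    (fun k hk x hx => hosc k hk x (h.spectrum_subset i hx)) u y).trans hscale
  have hlimit := (norm_inner_cfc_sub_sum_meshPoint_le h.isSelfAdjoint_limit
    (hφ.mono h.spectrum_limit_subset) hδ hε
    (fun k hk x hx => hosc k hk x (h.spectrum_limit_subset hx)) u y).trans hscale
  rw [Finset.sum_eq_zero (f := fun k => ⟪cfc (meshTail φ α δ k) T (u k), y⟫_ℂ) fun k hk => by
    rw [cfc_meshTail_cfc_meshHat_apply (hφ.mono h.spectrum_limit_subset) hδ hk hT,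
      inner_zero_left]] at hlimit
  rw [hv] at hH hlimit
  rw [sub_zero] at hlimit
  have htriangle := (norm_sub_le _ _).trans (add_le_add hH hlimit)
  rw [sub_right_comm, sub_sub_sub_cancel_right] at htriangle
  linarith [norm_le_norm_add_norm_sub'
    (⟪cfc φ (H i) v, y⟫_ℂ - ⟪cfc φ T v, y⟫_ℂ)
    (∑ k ∈ Finset.range (n + 1), ⟪cfc (meshTail φ α δ k) (H i) (u k), y⟫_ℂ)]

theorem CfcWeakLimit.tendsto_inner_cfc_of_isBigO (h : CfcWeakLimit l I f H T)
    (hI : I.Nontrivial) (hf : StrictConvexOn ℝ I f) (hfc : ContinuousOn f I)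
    (hφc : ContinuousOn φ I) (hφ : φ =O[𝓟 I] growthWeight f) (v y : 𝓗) :
    Tendsto (fun i => ⟪cfc φ (H i) v, y⟫_ℂ) l (𝓝 ⟪cfc φ T v, y⟫_ℂ) := by
  refine tendsto_sub_nhds_zero_iff.1 (tendsto_zero_of_forall_exists_majorant fun ε hε => ?_)
  have hord := hf.1.ordConnected
  obtain ⟨α, hα, β, hβ, hαβ, hT⟩ := exists_subset_Icc_of_isCompact (spectrum.isCompact T)
    h.spectrum_limit_subset hI
  obtain ⟨η, hη, hηε⟩ := exists_pos_mul_lt hε (6 * ‖v‖ * ‖y‖)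
  obtain ⟨r, hr, hosc⟩ := exists_forall_abs_sub_le hφc (hord.out hα hβ) hη
  obtain ⟨n, hn⟩ := ((tendsto_meshStep α β).eventually_lt_const (div_pos hr three_pos)).exists
  set δ := (β - α) / ((n : ℝ) + 2)
  have hδ : 0 < δ := div_pos (sub_pos.2 hαβ) (by positivity)
  have hlast : meshPoint α δ (n + 2) = β := meshPoint_last α β n
  rw [← hlast] at hβ hT hosc
  have hmesh_osc : ∀ k ∈ Finset.range (n + 1), ∀ x ∈ I, |meshPoint α δ (k + 1) - x| < 3 * δ →
      |φ x - φ (meshPoint α δ (k + 1))| ≤ η := fun k hk x hx hdist =>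
    hosc _ (Ioo_subset_Icc_self (meshPoint_succ_mem_Ioo hδ hk)) x hx (by linarith)
  have htail : ∀ k ∈ Finset.range (n + 1), Tendsto
      (fun i => ⟪cfc (meshTail φ α δ k) (H i) (cfc (meshHat α δ n k) T v), y⟫_ℂ) l (𝓝 0) :=
    fun k hk => by
      have hkn : k + 2 ≤ n + 2 := by simpa using Finset.mem_range_succ_iff.1 hk
      exact h.tendsto_inner_cfc_meshTail hf hfc hφc hφ hδ hk
        (meshPoint_mem_of_le hord hδ hα hβ (le_self_add.trans hkn))
        (meshPoint_mem_of_le hord hδ hα hβ hkn) hT v y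
  refine ⟨_, _, ?_, (tendsto_finsetSum _ htail).norm.add_const (6 * ‖v‖ * ‖y‖ * η),
    h.norm_inner_cfc_sub_inner_cfc_le hφc hδ hη.le hT hmesh_osc v y⟩
  simpa only [Finset.sum_const_zero, norm_zero, zero_add] using hηε

lemma CfcWeakLimit.tendsto_inner_cfc_of_subsingleton (h : CfcWeakLimit l I f H T)
    (hI : I.Subsingleton) (φ : ℝ → ℝ) (v y : 𝓗) :
    Tendsto (fun i => ⟪cfc φ (H i) v, y⟫_ℂ) l (𝓝 ⟪cfc φ T v, y⟫_ℂ) := by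
  obtain ⟨c, hc⟩ : ∃ c, ∀ x ∈ I, φ x = c := by
    rcases hI.eq_empty_or_singleton with rfl | ⟨a, rfl⟩
    · exact ⟨0, fun _ hx => hx.elim⟩
    · exact ⟨φ a, fun _ hx => congrArg φ hx⟩
  have hconst : ∀ {S : 𝓗 →L[ℂ] 𝓗}, IsSelfAdjoint S → spectrum ℝ S ⊆ I →
      cfc φ S v = (c : ℂ) • v := fun hS hSI => by
    rw [cfc_congr fun t ht => hc t (hSI ht), cfc_const_apply hS]
  simp only [hconst (h.isSelfAdjoint _) (h.spectrum_subset _),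
    hconst h.isSelfAdjoint_limit h.spectrum_limit_subset, tendsto_const_nhds]

end WeakLimit

/-- **Remark 2.6(iii), first part.** Under the hypotheses of Theorem 2.1, if
`φ : I → ℝ` is continuous and `φ(x)/max(1, |x|, f(x))` is bounded on `I`, then
`(φ(Hᵢ))` converges weakly to `φ(H)`. -/
theorem stmt_16 {𝓗 : Type*} [NormedAddCommGroup 𝓗] [InnerProductSpace ℂ 𝓗]
    [CompleteSpace 𝓗]
    {ι : Type*} (l : Filter ι) [l.NeBot]
    (I : Set ℝ) (hI : I.OrdConnected)
    (f : ℝ → ℝ) (hf : StrictConvexOn ℝ I f) (hfc : ContinuousOn f I)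
    (H : ι → 𝓗 →L[ℂ] 𝓗) (hsa : ∀ i, IsSelfAdjoint (H i))
    (hspec : ∀ i, spectrum ℝ (H i) ⊆ I)
    (T : 𝓗 →L[ℂ] 𝓗) (hTsa : IsSelfAdjoint T) (hTspec : spectrum ℝ T ⊆ I)
    (hWOT : ∀ v w : 𝓗, Tendsto (fun i => ⟪(H i) v, w⟫_ℂ) l (𝓝 ⟪T v, w⟫_ℂ))
    (hfWOT : ∀ v w : 𝓗,
      Tendsto (fun i => ⟪(cfc f (H i)) v, w⟫_ℂ) l (𝓝 ⟪(cfc f T) v, w⟫_ℂ))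
    (φ : ℝ → ℝ) (hφc : ContinuousOn φ I)
    (hφb : ∃ C : ℝ, ∀ x ∈ I, |φ x / max 1 (max |x| (f x))| ≤ C) :
    ∀ v w : 𝓗, Tendsto (fun i => ⟪(cfc φ (H i)) v, w⟫_ℂ) l (𝓝 ⟪(cfc φ T) v, w⟫_ℂ) := by
  have h : CfcWeakLimit l I f H T := ⟨hsa, hspec, hTsa, hTspec, hWOT, hfWOT⟩
  obtain ⟨C, hC⟩ := hφb
  rcases I.subsingleton_or_nontrivial with hI_sub | hI_nontrivial
  · exact h.tendsto_inner_cfc_of_subsingleton hI_sub φ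
  · exact h.tendsto_inner_cfc_of_isBigO hI_nontrivial hf hfc hφc
      (isBigO_growthWeight_of_abs_div_le hC)
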